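/- Let K ⊂ ℝ^{n+1} be a smooth, strictly convex body with the origin in its interior, and let K* = {y ∈ ℝ^{n+1} : ⟨x,y⟩ ≤ 1 for all x ∈ K} be its polar body. Denote by h, 𝒦 the support function and Gauss curvature of ∂K, and by h*, 𝒦* those of ∂K*. Then for every x ∈ S^n, with x* := X(x)/|X(x)| where X = Dh is the inverse Gauss map of ∂K, one has h(x)^{n+2} (h*(x*))^{n+2} / (𝒦(x) 𝒦*(x*)) = 1. -/

import Mathlib

open MeasureTheory Matrix Metric
open scoped RealInnerProductSpace

noncomputable section

/-- Euclidean space `ℝ^{n+1}`. -/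
abbrev Euc (n : ℕ) : Type := EuclideanSpace ℝ (Fin (n + 1))

/-- The Euclidean Hessian matrix of `H : ℝ^{n+1} → ℝ` at `x`. -/
def ehess (n : ℕ) (H : Euc n → ℝ) (x : Euc n) : Matrix (Fin (n + 1)) (Fin (n + 1)) ℝ :=
  Matrix.of fun i j =>
    fderiv ℝ (fun y => fderiv ℝ H y (EuclideanSpace.single j 1)) x (EuclideanSpace.single i 1)

/-- For the 1-homogeneous extension `H` of the support function `h` and `x ∈ S^n`, the matrix
`D²H(x) + h(x)·x xᵀ`.  Its restriction to the tangent space `x^⊥ = T_x S^n` is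
`A[h] = ∇̄²h + h ḡ`, and `x` is an eigenvector with eigenvalue `h(x)`. -/
def bmat (n : ℕ) (H : Euc n → ℝ) (x : Euc n) : Matrix (Fin (n + 1)) (Fin (n + 1)) ℝ :=
  ehess n H x + Matrix.of fun i j => H x * (x i * x j)

/-- `σ_n = det A[h] = det(∇̄²h + h ḡ)/det ḡ`, computed as `det(bmat)/h`. -/
def sigman (n : ℕ) (H : Euc n → ℝ) (x : Euc n) : ℝ :=
  Matrix.det (bmat n H x) / H x

/-- The Gauss curvature `𝒦 = 1/σ_n`. -/
def gaussCurv (n : ℕ) (H : Euc n → ℝ) (x : Euc n) : ℝ := (sigman n H x)⁻¹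

/-- The round (spherical) gradient `∇̄f` at `x ∈ S^n`: the Euclidean gradient of the
0-homogeneous extension `y ↦ f(y/‖y‖)`.  It depends only on `f|_{S^n}` and lies in `T_x S^n`. -/
def sphGrad (n : ℕ) (f : Euc n → ℝ) (x : Euc n) : Euc n :=
  gradient (fun y => f (‖y‖⁻¹ • y)) x

/-- The function `log (h^{n+2}/𝒦)` (as a function of `y`; on the sphere it agrees with the
centro-affine expression appearing in the paper). -/
def logQ (n : ℕ) (H : Euc n → ℝ) (y : Euc n) : ℝ :=
  Real.log ((H y) ^ (n + 2) / gaussCurv n H y)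

/-- The centro-affine inner product `g(∇f, ∇u) = h ⟨A[h]⁻¹ ∇̄f, ∇̄u⟩` of the `g`-gradients of
`f` and `u`, where `g = A[h]/h` is the centro-affine metric. -/
def gInner (n : ℕ) (H f u : Euc n → ℝ) (x : Euc n) : ℝ :=
  H x * ∑ i, (bmat n H x)⁻¹.mulVec (fun j => sphGrad n f x j) i * sphGrad n u x i

/-- The squared centro-affine norm `|∇f|_g²` of the `g`-gradient of `f`. -/
def gNormSq (n : ℕ) (H f : Euc n → ℝ) (x : Euc n) : ℝ := gInner n H f f x

/-- The centro-affine Laplacian `Δf = div_g(∇ f)` (with respect to the centro-affine connection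
`∇` induced by the centro-affine normal `ξ = X`, and the centro-affine metric `g = A[h]/h`),
computed via the identity `Δf = tr_g(A[hf]/h) - n f`, i.e.
`Δf = tr(B[h]⁻¹ B[hf]) - (n+1) f` where `B[u] = D²ũ + u·x xᵀ` for the 1-homogeneous
extension `ũ` of `u`. -/
def caLap (n : ℕ) (H f : Euc n → ℝ) (x : Euc n) : ℝ :=
  Matrix.trace ((bmat n H x)⁻¹ * bmat n (fun y => H y * f (‖y‖⁻¹ • y)) x) - (n + 1) * f x

/-- The spherical Lebesgue measure on `S^n ⊂ ℝ^{n+1}` (up to a positive constant). -/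
def sphMeasure (n : ℕ) : Measure (sphere (0 : Euc n) 1) :=
  (volume : Measure (Euc n)).toSphere

/-- The density of the cone-volume-type measure `dV = h σ_n dμ` with respect to the spherical
Lebesgue measure. -/
def volDens (n : ℕ) (H : Euc n → ℝ) (x : Euc n) : ℝ := H x * sigman n H x

open scoped Topology

/-!
Put `F = h² / 2`. If `A = D²h(x)` at a unit vector `x`, then `A x = 0` by homogeneity, and
`D²F(x) = h A + X Xᵀ` with `⟨x, X⟩ = h`; moving the rank one part onto `x xᵀ` shows
`det D²F(x) = h ^ (n + 2) / 𝒦`. Polarity says that `F` and `F* = h*² / 2` are Legendre dual, that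
is `∇F* ∘ ∇F = id`, so `det D²F*(∇F(x)) * det D²F(x) = 1`. Finally `D²F*` is homogeneous of degree
zero and `∇F(x) = h X` is a positive multiple of `x*`.
-/

section Determinants

lemma det_add_vecMulVec_of_vecMul_eq_zero_of_mulVec_eq_zero {m R : Type*} [Fintype m]
    [DecidableEq m] [CommRing R] {A : Matrix m m R} {x : m → R} (hxx : x ⬝ᵥ x = 1)
    (hxA : x ᵥ* A = 0) (hAx : A *ᵥ x = 0) (u v : m → R) :
    (A + vecMulVec u v).det = (x ⬝ᵥ u) * (x ⬝ᵥ v) * (A + vecMulVec x x).det := by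
  have det_left : (1 + vecMulVec (u - x) x).det = x ⬝ᵥ u := by
    rw [vecMulVec_eq Unit, det_one_add_replicateCol_mul_replicateRow, dotProduct_sub, hxx]
    ring
  have det_right : (1 + vecMulVec x (v - x)).det = x ⬝ᵥ v := by
    rw [vecMulVec_eq Unit, det_one_add_replicateCol_mul_replicateRow, sub_dotProduct, hxx,
      dotProduct_comm v x]
    ring
  have mul_left : (1 + vecMulVec (u - x) x) * (A + vecMulVec x x) = A + vecMulVec u x := by
    rw [add_mul, one_mul, vecMulVec_mul, vecMul_add, hxA, vecMul_vecMulVec, hxx, one_smul,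
      zero_add, sub_vecMulVec]
    abel
  have mul_right : (A + vecMulVec u x) * (1 + vecMulVec x (v - x)) = A + vecMulVec u v := by
    rw [mul_add, mul_one, mul_vecMulVec, add_mulVec, hAx, vecMulVec_mulVec, hxx, zero_add,
      MulOpposite.op_one, one_smul, vecMulVec_sub]
    abel
  rw [← mul_right, ← mul_left, det_mul, det_mul, det_left, det_right]
  ring

lemma det_fderiv_mul_det_fderiv_of_eventually_leftInverse {E : Type*} [NormedAddCommGroup E]
    [NormedSpace ℝ E] {f g : E → E} {x : E} (hg : DifferentiableAt ℝ g (f x))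
    (hf : DifferentiableAt ℝ f x) (hgf : ∀ᶠ y in 𝓝 x, g (f y) = y) :
    (fderiv ℝ g (f x)).det * (fderiv ℝ f x).det = 1 := by
  have comp_eq_id : (fderiv ℝ g (f x)).comp (fderiv ℝ f x) = .id ℝ E :=
    (hg.hasFDerivAt.comp x hf.hasFDerivAt).unique ((hasFDerivAt_id x).congr_of_eventuallyEq hgf)
  calc (fderiv ℝ g (f x)).det * (fderiv ℝ f x).det
      = ((fderiv ℝ g (f x)).comp (fderiv ℝ f x)).det := (LinearMap.det_comp _ _).symm
    _ = 1 := by rw [comp_eq_id]; exact LinearMap.det_id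

end Determinants

section PositiveHomogeneity

variable {E G : Type*} [NormedAddCommGroup E] [NormedSpace ℝ E] [NormedAddCommGroup G]
  [NormedSpace ℝ G] {k : ℕ} {f : E → G}

/-- Positive homogeneity of degree `k`: only positive scalars are allowed, so that support
functions of bodies that are not centrally symmetric qualify. -/
def IsPosHomog (k : ℕ) (f : E → G) : Prop :=
  ∀ ⦃c : ℝ⦄, 0 < c → ∀ x, f (c • x) = c ^ k • f x

protected lemma IsPosHomog.fderiv (hf : IsPosHomog (k + 1) f) : IsPosHomog k (fderiv ℝ f) := by
  intro c hc x
  have fderiv_scaled : c • fderiv ℝ f (c • x) = c • c ^ k • fderiv ℝ f x :=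
    calc c • fderiv ℝ f (c • x) = fderiv ℝ (fun y => f (c • y)) x := (fderiv_comp_smul c).symm
      _ = fderiv ℝ (c ^ (k + 1) • f) x := by rw [funext (hf hc)]; rfl
      _ = c • c ^ k • fderiv ℝ f x := by
        rw [fderiv_const_smul_field, pow_succ', mul_smul, Pi.smul_apply, Pi.smul_apply]
  exact smul_right_injective _ hc.ne' fderiv_scaled

lemma IsPosHomog.fderiv_apply_self (hf : IsPosHomog k f) {x : E} (hx : DifferentiableAt ℝ f x) :
    fderiv ℝ f x x = (k : ℝ) • f x := by
  have deriv_ray : HasDerivAt (fun t : ℝ => f (t • x)) (fderiv ℝ f x x) 1 := by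
    have ray : HasDerivAt (fun t : ℝ => t • x) x 1 := by
      simpa using (hasDerivAt_id (1 : ℝ)).smul_const x
    exact hx.hasFDerivAt.comp_hasDerivAt_of_eq (1 : ℝ) ray (one_smul ℝ x).symm
  have deriv_pow : HasDerivAt (fun t : ℝ => t ^ k • f x) ((k : ℝ) • f x) 1 := by
    simpa using (hasDerivAt_pow k (1 : ℝ)).smul_const (f x)
  refine deriv_ray.unique (deriv_pow.congr_of_eventuallyEq ?_)
  filter_upwards [lt_mem_nhds zero_lt_one] with t ht using hf ht x

lemma IsPosHomog.pos_of_pos_on_sphere {H : E → ℝ} (hH : IsPosHomog k H)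
    (hpos : ∀ x ∈ sphere (0 : E) 1, 0 < H x) {x : E} (hx : x ≠ 0) : 0 < H x := by
  have norm_pos : 0 < ‖x‖ := norm_pos_iff.2 hx
  calc 0 < ‖x‖ ^ k * H (‖x‖⁻¹ • x) :=
        mul_pos (pow_pos norm_pos k) (hpos _ (by simp [norm_smul, hx]))
    _ = H x := by rw [← smul_eq_mul, ← hH norm_pos, smul_inv_smul₀ norm_pos.ne']

end PositiveHomogeneity

section Convexity

variable {E : Type*} [NormedAddCommGroup E] [NormedSpace ℝ E] {f : E → ℝ} {x y : E}

lemma add_fderiv_sub_le_of_convexOn {s : Set E} (hf : ConvexOn ℝ s f) (hxs : x ∈ s) (hys : y ∈ s)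
    (hx : DifferentiableAt ℝ f x) : f x + fderiv ℝ f x (y - x) ≤ f y := by
  have deriv_line :
      HasDerivAt (f ∘ AffineMap.lineMap (k := ℝ) x y) (fderiv ℝ f x (y - x)) 0 :=
    hx.hasFDerivAt.comp_hasDerivAt_of_eq (0 : ℝ) AffineMap.hasDerivAt_lineMap (by simp)
  have le_slope := (hf.comp_affineMap (AffineMap.lineMap (k := ℝ) x y)).le_slope_of_hasDerivAt
    (by simpa using hxs) (by simpa using hys) zero_lt_one deriv_line
  simp only [slope_def_field, Function.comp_apply, AffineMap.lineMap_apply_one,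
    AffineMap.lineMap_apply_zero, sub_zero, div_one] at le_slope
  linarith

lemma IsPosHomog.fderiv_apply_le (hf : IsPosHomog 1 f) (hconv : ConvexOn ℝ Set.univ f)
    (hx : DifferentiableAt ℝ f x) (y : E) : fderiv ℝ f x y ≤ f y := by
  have tangent_le := add_fderiv_sub_le_of_convexOn hconv (Set.mem_univ x) (Set.mem_univ y) hx
  have euler := hf.fderiv_apply_self hx
  rw [map_sub, euler, Nat.cast_one, one_smul] at tangent_le
  linarith

end Convexity

section HalfSquare

variable {E : Type*} [NormedAddCommGroup E] [NormedSpace ℝ E] {k : ℕ} {H : E → ℝ} {x : E}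

/-- The potential `H² / 2`; the potentials of polar support functions are Legendre dual. -/
def halfSq {α : Type*} (H : α → ℝ) (x : α) : ℝ := H x ^ 2 / 2

protected lemma IsPosHomog.halfSq (hH : IsPosHomog k H) : IsPosHomog (k * 2) (halfSq H) := by
  intro c hc x
  simp only [halfSq, hH hc x, smul_eq_mul, mul_pow, pow_mul, mul_div_assoc]

lemma contDiffAt_halfSq {m : WithTop ℕ∞} (hH : ContDiffAt ℝ m H x) :
    ContDiffAt ℝ m (halfSq H) x :=
  (hH.pow 2).div_const 2

end HalfSquare

section Gradient

variable {E : Type*} [NormedAddCommGroup E] [InnerProductSpace ℝ E] [CompleteSpace E] {k : ℕ}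
  {H : E → ℝ} {x : E}

protected lemma IsPosHomog.gradient (hH : IsPosHomog (k + 1) H) : IsPosHomog k (gradient H) := by
  intro c hc x
  simp only [gradient, hH.fderiv hc x, map_smulₛₗ, conj_trivial]

lemma IsPosHomog.inner_gradient_self (hH : IsPosHomog k H) (hx : DifferentiableAt ℝ H x) :
    ⟪x, gradient H x⟫ = k * H x := by
  rw [real_inner_comm, inner_gradient_left, hH.fderiv_apply_self hx, smul_eq_mul]

lemma differentiableAt_gradient_of_contDiffAt (hH : ContDiffAt ℝ 2 H x) :
    DifferentiableAt ℝ (gradient H) x :=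
  (InnerProductSpace.toDual ℝ E).symm.differentiableAt.comp x
    ((hH.fderiv_right (m := 1) le_rfl).differentiableAt one_ne_zero)

lemma fderiv_fderiv_apply_eq_inner (hH : DifferentiableAt ℝ (gradient H) x) (v w : E) :
    fderiv ℝ (fun y => fderiv ℝ H y w) x v = ⟪fderiv ℝ (gradient H) x v, w⟫ := by
  have fderiv_eq_inner : (fun y => fderiv ℝ H y w) = fun y => ⟪gradient H y, w⟫ :=
    funext fun y => inner_gradient_left.symm
  rw [fderiv_eq_inner, fderiv_inner_apply ℝ hH (differentiableAt_const w)]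
  simp

lemma inner_fderiv_gradient_comm (hH : ContDiffAt ℝ 2 H x) (v w : E) :
    ⟪fderiv ℝ (gradient H) x v, w⟫ = ⟪fderiv ℝ (gradient H) x w, v⟫ := by
  have differentiable := (hH.fderiv_right (m := 1) le_rfl).differentiableAt one_ne_zero
  have second_fderiv (v w : E) :
      ⟪fderiv ℝ (gradient H) x v, w⟫ = fderiv ℝ (fderiv ℝ H) x v w := by
    rw [← fderiv_fderiv_apply_eq_inner (differentiableAt_gradient_of_contDiffAt hH),
      fderiv_clm_apply differentiable (differentiableAt_const w)]
    simp
  rw [second_fderiv, second_fderiv, (hH.isSymmSndFDerivAt (by simp)).eq]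

lemma gradient_halfSq (hx : DifferentiableAt ℝ H x) :
    gradient (halfSq H) x = H x • gradient H x := by
  have fderiv_halfSq : HasFDerivAt (halfSq H) (H x • fderiv ℝ H x) x := by
    have deriv_half_sq : HasDerivAt (fun t : ℝ => t ^ 2 / 2) (H x) (H x) := by
      simpa using (hasDerivAt_pow 2 (H x)).div_const 2
    exact deriv_half_sq.comp_hasFDerivAt x hx.hasFDerivAt
  simp only [gradient, fderiv_halfSq.fderiv, map_smulₛₗ, conj_trivial]

lemma fderiv_gradient_halfSq_apply (hH : ContDiffAt ℝ 2 H x) (v : E) :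
    fderiv ℝ (gradient (halfSq H)) x v =
      H x • fderiv ℝ (gradient H) x v + fderiv ℝ H x v • gradient H x := by
  have eventually_gradient : gradient (halfSq H) =ᶠ[𝓝 x] fun y => H y • gradient H y := by
    filter_upwards [hH.eventually (by simp)] with y hy
    exact gradient_halfSq (hy.differentiableAt two_ne_zero)
  rw [eventually_gradient.fderiv_eq, fderiv_fun_smul (hH.differentiableAt two_ne_zero)
    (differentiableAt_gradient_of_contDiffAt hH)]
  simp

end Gradient

section Polarity

variable {E : Type*} [NormedAddCommGroup E] [InnerProductSpace ℝ E]

/-- The Wulff shape `{y | ⟪x, y⟫ ≤ H x for all x}`, which is the convex body with support function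
`H` when `H` is sublinear. -/
def wulffShape (H : E → ℝ) : Set E := {y | ∀ x, ⟪x, y⟫ ≤ H x}

/-- The (one-sided) polar `K* = {y | ⟪x, y⟫ ≤ 1 for all x ∈ K}`. Mathlib's `LinearMap.polar` is the
absolute polar, which differs from it for bodies that are not centrally symmetric. -/
def polarBody (K : Set E) : Set E := {y | ∀ x ∈ K, ⟪x, y⟫ ≤ 1}

/-- `H` is the 1-homogeneous extension of the support function of a convex body with the origin in
its interior, and it is of class `C²` off the origin. -/
structure IsC2SupportFunction (H : E → ℝ) : Prop where
  map_pos_smul : ∀ c : ℝ, 0 < c → ∀ x : E, H (c • x) = c * H x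
  convexOn : ConvexOn ℝ Set.univ H
  contDiffOn : ContDiffOn ℝ 2 H {(0 : E)}ᶜ
  pos_on_sphere : ∀ x ∈ sphere (0 : E) 1, 0 < H x

lemma inv_smul_mem_polarBody_wulffShape {H : E → ℝ} {x : E} (hx : 0 < H x) :
    (H x)⁻¹ • x ∈ polarBody (wulffShape H) := by
  intro y hy
  rw [inner_smul_right, real_inner_comm, inv_mul_le_one₀ hx]
  exact hy x

lemma inv_mul_inner_le_of_wulffShape_eq_polarBody {H Hs : E → ℝ} {x : E}
    (hpolar : wulffShape Hs = polarBody (wulffShape H)) (hx : 0 < H x) (z : E) :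
    (H x)⁻¹ * ⟪x, z⟫ ≤ Hs z := by
  have mem_wulffShape : (H x)⁻¹ • x ∈ wulffShape Hs :=
    hpolar ▸ inv_smul_mem_polarBody_wulffShape hx
  simpa only [inner_smul_right, real_inner_comm] using mem_wulffShape z

namespace IsC2SupportFunction

variable {H Hs : E → ℝ} {x : E}

lemma isPosHomog (hH : IsC2SupportFunction H) : IsPosHomog 1 H := fun c hc x => by
  rw [hH.map_pos_smul c hc x, pow_one, smul_eq_mul]

lemma pos (hH : IsC2SupportFunction H) (hx : x ≠ 0) : 0 < H x :=
  hH.isPosHomog.pos_of_pos_on_sphere hH.pos_on_sphere hx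

lemma contDiffAt (hH : IsC2SupportFunction H) (hx : x ≠ 0) : ContDiffAt ℝ 2 H x :=
  hH.contDiffOn.contDiffAt (isOpen_compl_singleton.mem_nhds hx)

lemma differentiableAt (hH : IsC2SupportFunction H) (hx : x ≠ 0) : DifferentiableAt ℝ H x :=
  (hH.contDiffAt hx).differentiableAt two_ne_zero

variable [CompleteSpace E]

lemma inner_gradient_self (hH : IsC2SupportFunction H) (hx : x ≠ 0) :
    ⟪x, gradient H x⟫ = H x := by
  simpa using hH.isPosHomog.inner_gradient_self (hH.differentiableAt hx)

lemma gradient_ne_zero (hH : IsC2SupportFunction H) (hx : x ≠ 0) : gradient H x ≠ 0 := by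
  intro gradient_eq_zero
  have inner_eq := hH.inner_gradient_self hx
  rw [gradient_eq_zero, inner_zero_right] at inner_eq
  exact (hH.pos hx).ne inner_eq

lemma gradient_mem_wulffShape (hH : IsC2SupportFunction H) (hx : x ≠ 0) :
    gradient H x ∈ wulffShape H := by
  intro y
  rw [real_inner_comm, inner_gradient_left]
  exact hH.isPosHomog.fderiv_apply_le hH.convexOn (hH.differentiableAt hx) y

lemma polar_gradient_eq_one (hH : IsC2SupportFunction H) (hHs : IsC2SupportFunction Hs)
    (hpolar : wulffShape Hs = polarBody (wulffShape H)) (hx : x ≠ 0) :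
    Hs (gradient H x) = 1 := by
  have gradient_ne := hH.gradient_ne_zero hx
  apply le_antisymm
  · have mem_polar : gradient Hs (gradient H x) ∈ polarBody (wulffShape H) :=
      hpolar ▸ hHs.gradient_mem_wulffShape gradient_ne
    rw [← hHs.inner_gradient_self gradient_ne]
    exact mem_polar _ (hH.gradient_mem_wulffShape hx)
  · calc 1 = (H x)⁻¹ * ⟪x, gradient H x⟫ := by
          rw [hH.inner_gradient_self hx, inv_mul_cancel₀ (hH.pos hx).ne']
      _ ≤ Hs (gradient H x) :=
          inv_mul_inner_le_of_wulffShape_eq_polarBody hpolar (hH.pos hx) _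

lemma gradient_polar_gradient (hH : IsC2SupportFunction H) (hHs : IsC2SupportFunction Hs)
    (hpolar : wulffShape Hs = polarBody (wulffShape H)) (hx : x ≠ 0) :
    gradient Hs (gradient H x) = (H x)⁻¹ • x := by
  -- The linear function `⟪x / H x, ·⟫` lies below `Hs` and touches it at `gradient H x`.
  have isLocalMin : IsLocalMin (fun z => Hs z - ⟪(H x)⁻¹ • x, z⟫) (gradient H x) := by
    refine Filter.Eventually.of_forall fun z => ?_
    simp only [real_inner_smul_left, hH.polar_gradient_eq_one hHs hpolar hx,
      hH.inner_gradient_self hx, inv_mul_cancel₀ (hH.pos hx).ne', sub_self]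
    exact sub_nonneg.2 (inv_mul_inner_le_of_wulffShape_eq_polarBody hpolar (hH.pos hx) z)
  have hasFDerivAt := (hHs.differentiableAt (hH.gradient_ne_zero hx)).hasFDerivAt.sub
    (innerSL ℝ ((H x)⁻¹ • x)).hasFDerivAt
  have fderiv_eq := sub_eq_zero.1 (isLocalMin.hasFDerivAt_eq_zero hasFDerivAt)
  refine ext_inner_right ℝ fun v => ?_
  rw [inner_gradient_left, fderiv_eq, innerSL_apply_apply]

lemma gradient_halfSq_ne_zero (hH : IsC2SupportFunction H) (hx : x ≠ 0) :
    gradient (halfSq H) x ≠ 0 := by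
  rw [gradient_halfSq (hH.differentiableAt hx)]
  exact smul_ne_zero (hH.pos hx).ne' (hH.gradient_ne_zero hx)

lemma gradient_halfSq_polar_gradient_halfSq (hH : IsC2SupportFunction H)
    (hHs : IsC2SupportFunction Hs) (hpolar : wulffShape Hs = polarBody (wulffShape H))
    (hx : x ≠ 0) : gradient (halfSq Hs) (gradient (halfSq H) x) = x := by
  have homog : IsPosHomog 1 (gradient (halfSq Hs)) := hHs.isPosHomog.halfSq.gradient
  calc gradient (halfSq Hs) (gradient (halfSq H) x)
      = H x • gradient (halfSq Hs) (gradient H x) := by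
        rw [gradient_halfSq (hH.differentiableAt hx), homog (hH.pos hx), pow_one]
    _ = H x • gradient Hs (gradient H x) := by
        rw [gradient_halfSq (hHs.differentiableAt (hH.gradient_ne_zero hx)),
          hH.polar_gradient_eq_one hHs hpolar hx, one_smul]
    _ = x := by
        rw [hH.gradient_polar_gradient hHs hpolar hx, smul_inv_smul₀ (hH.pos hx).ne']

lemma differentiableAt_gradient_halfSq (hH : IsC2SupportFunction H) (hx : x ≠ 0) :
    DifferentiableAt ℝ (gradient (halfSq H)) x :=
  differentiableAt_gradient_of_contDiffAt (contDiffAt_halfSq (hH.contDiffAt hx))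

lemma det_fderiv_gradient_halfSq_polar_mul (hH : IsC2SupportFunction H)
    (hHs : IsC2SupportFunction Hs) (hpolar : wulffShape Hs = polarBody (wulffShape H))
    (hx : x ≠ 0) :
    (fderiv ℝ (gradient (halfSq Hs)) (gradient (halfSq H) x)).det *
      (fderiv ℝ (gradient (halfSq H)) x).det = 1 := by
  apply det_fderiv_mul_det_fderiv_of_eventually_leftInverse
    (hHs.differentiableAt_gradient_halfSq (hH.gradient_halfSq_ne_zero hx))
    (hH.differentiableAt_gradient_halfSq hx)
  filter_upwards [isOpen_compl_singleton.mem_nhds hx] with y hy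
  exact hH.gradient_halfSq_polar_gradient_halfSq hHs hpolar hy

lemma fderiv_gradient_halfSq_normalize_gradient (hH : IsC2SupportFunction H)
    (hHs : IsC2SupportFunction Hs) (hx : x ≠ 0) :
    fderiv ℝ (gradient (halfSq Hs)) (‖gradient H x‖⁻¹ • gradient H x) =
      fderiv ℝ (gradient (halfSq Hs)) (gradient (halfSq H) x) := by
  have homog : IsPosHomog 0 (fderiv ℝ (gradient (halfSq Hs))) :=
    hHs.isPosHomog.halfSq.gradient.fderiv
  have norm_pos : 0 < ‖gradient H x‖ := norm_pos_iff.2 (hH.gradient_ne_zero hx)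
  rw [gradient_halfSq (hH.differentiableAt hx), homog (inv_pos.2 norm_pos), homog (hH.pos hx),
    pow_zero, pow_zero]

end IsC2SupportFunction

end Polarity

section HessianMatrix

variable {n : ℕ} {H : Euc n → ℝ} {x : Euc n}

lemma ehess_eq_transpose_toMatrix (hH : DifferentiableAt ℝ (gradient H) x) :
    ehess n H x = (LinearMap.toMatrix (EuclideanSpace.basisFun (Fin (n + 1)) ℝ).toBasis
      (EuclideanSpace.basisFun (Fin (n + 1)) ℝ).toBasis
        (fderiv ℝ (gradient H) x).toLinearMap)ᵀ := by
  ext i j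
  rw [ehess, Matrix.of_apply, fderiv_fderiv_apply_eq_inner hH]
  simp [LinearMap.toMatrix_apply, EuclideanSpace.inner_single_right]

lemma det_ehess (hH : DifferentiableAt ℝ (gradient H) x) :
    (ehess n H x).det = (fderiv ℝ (gradient H) x).det := by
  rw [ehess_eq_transpose_toMatrix hH, det_transpose, LinearMap.det_toMatrix]

lemma vecMul_ehess (hH : DifferentiableAt ℝ (gradient H) x) (v : Euc n) :
    v.ofLp ᵥ* ehess n H x = (fderiv ℝ (gradient H) x v).ofLp := by
  rw [ehess_eq_transpose_toMatrix hH, vecMul_transpose]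
  exact LinearMap.toMatrix_mulVec_repr (EuclideanSpace.basisFun (Fin (n + 1)) ℝ).toBasis
    (EuclideanSpace.basisFun (Fin (n + 1)) ℝ).toBasis (fderiv ℝ (gradient H) x).toLinearMap v

lemma isSymm_ehess (hH : ContDiffAt ℝ 2 H x) : (ehess n H x).IsSymm := by
  have differentiable := differentiableAt_gradient_of_contDiffAt hH
  ext i j
  rw [transpose_apply, ehess, Matrix.of_apply, Matrix.of_apply,
    fderiv_fderiv_apply_eq_inner differentiable, fderiv_fderiv_apply_eq_inner differentiable,
    inner_fderiv_gradient_comm hH]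

lemma ehess_halfSq (hH : ContDiffAt ℝ 2 H x) :
    ehess n (halfSq H) x =
      H x • ehess n H x + vecMulVec (gradient H x).ofLp (gradient H x).ofLp := by
  have gradient_apply (i : Fin (n + 1)) :
      fderiv ℝ H x (EuclideanSpace.single i 1) = gradient H x i := by
    rw [← inner_gradient_left, EuclideanSpace.inner_single_right]
    simp
  ext i j
  rw [ehess, Matrix.of_apply, fderiv_fderiv_apply_eq_inner
    (differentiableAt_gradient_of_contDiffAt (contDiffAt_halfSq hH)),
    fderiv_gradient_halfSq_apply hH, inner_add_left, real_inner_smul_left, real_inner_smul_left,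
    ← fderiv_fderiv_apply_eq_inner (differentiableAt_gradient_of_contDiffAt hH),
    inner_gradient_left, gradient_apply, gradient_apply]
  rfl

lemma bmat_eq_ehess_add_vecMulVec :
    bmat n H x = ehess n H x + vecMulVec (H x • x.ofLp) x.ofLp := by
  ext i j
  simp [bmat, vecMulVec_apply]

lemma IsPosHomog.det_ehess_add_vecMulVec (hH : IsPosHomog 1 H) (hH2 : ContDiffAt ℝ 2 H x)
    (hx : ‖x‖ = 1) (u v : Euc n) :
    (ehess n H x + vecMulVec u.ofLp v.ofLp).det =
      ⟪x, u⟫ * ⟪x, v⟫ * (ehess n H x + vecMulVec x.ofLp x.ofLp).det := by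
  have differentiable := differentiableAt_gradient_of_contDiffAt hH2
  have dotProduct_eq_inner (v w : Euc n) : v.ofLp ⬝ᵥ w.ofLp = ⟪v, w⟫ := by
    rw [EuclideanSpace.inner_eq_star_dotProduct, star_trivial, dotProduct_comm]
  have dot_self : x.ofLp ⬝ᵥ x.ofLp = 1 := by
    rw [dotProduct_eq_inner, real_inner_self_eq_norm_sq, hx, one_pow]
  have vecMul_eq_zero : x.ofLp ᵥ* ehess n H x = 0 := by
    rw [vecMul_ehess differentiable, hH.gradient.fderiv_apply_self differentiable]
    simp
  have mulVec_eq_zero : ehess n H x *ᵥ x.ofLp = 0 := by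
    rw [← vecMul_transpose, (isSymm_ehess hH2).eq, vecMul_eq_zero]
  rw [det_add_vecMulVec_of_vecMul_eq_zero_of_mulVec_eq_zero dot_self vecMul_eq_zero
    mulVec_eq_zero, dotProduct_eq_inner, dotProduct_eq_inner]

lemma IsPosHomog.sigman_eq_det (hH : IsPosHomog 1 H) (hH2 : ContDiffAt ℝ 2 H x) (hx : ‖x‖ = 1)
    (hHx : H x ≠ 0) :
    sigman n H x = (ehess n H x + vecMulVec x.ofLp x.ofLp).det := by
  rw [sigman, bmat_eq_ehess_add_vecMulVec, ← WithLp.ofLp_smul, hH.det_ehess_add_vecMulVec hH2 hx,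
    inner_smul_right, real_inner_self_eq_norm_sq, hx]
  field_simp

lemma IsPosHomog.det_ehess_halfSq (hH : IsPosHomog 1 H) (hH2 : ContDiffAt ℝ 2 H x)
    (hx : ‖x‖ = 1) (hHx : H x ≠ 0) :
    (ehess n (halfSq H) x).det = H x ^ (n + 2) / gaussCurv n H x := by
  have euler : ⟪x, gradient H x⟫ = H x := by
    simpa using hH.inner_gradient_self (hH2.differentiableAt two_ne_zero)
  have ehess_factor : ehess n (halfSq H) x = H x • (ehess n H x +
      vecMulVec ((H x)⁻¹ • gradient H x).ofLp (gradient H x).ofLp) := by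
    rw [ehess_halfSq hH2, smul_add, WithLp.ofLp_smul, smul_vecMulVec, smul_inv_smul₀ hHx]
  rw [ehess_factor, det_smul, Fintype.card_fin, hH.det_ehess_add_vecMulVec hH2 hx,
    inner_smul_right, euler, ← hH.sigman_eq_det hH2 hx hHx, gaussCurv, div_inv_eq_mul,
    inv_mul_cancel₀ hHx]
  ring

lemma IsC2SupportFunction.det_fderiv_gradient_halfSq (hH : IsC2SupportFunction H)
    (hx : ‖x‖ = 1) :
    (fderiv ℝ (gradient (halfSq H)) x).det = H x ^ (n + 2) / gaussCurv n H x := by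
  have x_ne : x ≠ 0 := norm_ne_zero_iff.1 (hx ▸ one_ne_zero)
  rw [← det_ehess (hH.differentiableAt_gradient_halfSq x_ne),
    hH.isPosHomog.det_ehess_halfSq (hH.contDiffAt x_ne) hx (hH.pos x_ne).ne']

end HessianMatrix

theorem polar_duality_identity_general {n : ℕ} {H Hs : Euc n → ℝ} (hH : IsC2SupportFunction H)
    (hHs : IsC2SupportFunction Hs) (hpolar : wulffShape Hs = polarBody (wulffShape H))
    {x : Euc n} (hx : ‖x‖ = 1) :
    H x ^ (n + 2) * Hs (‖gradient H x‖⁻¹ • gradient H x) ^ (n + 2)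
        / (gaussCurv n H x * gaussCurv n Hs (‖gradient H x‖⁻¹ • gradient H x)) = 1 := by
  have x_ne : x ≠ 0 := norm_ne_zero_iff.1 (hx ▸ one_ne_zero)
  have norm_normal : ‖‖gradient H x‖⁻¹ • gradient H x‖ = 1 :=
    norm_smul_inv_norm (hH.gradient_ne_zero x_ne)
  rw [mul_div_mul_comm, ← hH.det_fderiv_gradient_halfSq hx,
    ← hHs.det_fderiv_gradient_halfSq norm_normal,
    hH.fderiv_gradient_halfSq_normalize_gradient hHs x_ne, mul_comm]
  exact hH.det_fderiv_gradient_halfSq_polar_mul hHs hpolar x_ne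

/-- Let `K ⊂ ℝ^{n+1}` be a smooth, strictly convex body with the origin in
its interior and let `K*` be its polar body (also smooth and strictly convex, with support
function `h*` encoded by `Hs`).  Then for every `x ∈ S^n`, with `x* = X(x)/|X(x)|`:
`h(x)^{n+2} (h*(x*))^{n+2} / (𝒦(x) 𝒦*(x*)) = 1`. -/
theorem polar_duality_identity
    (n : ℕ) (hn : 2 ≤ n)
    (H : Euc n → ℝ) (K : Set (Euc n))
    (hK : K = {y : Euc n | ∀ x : Euc n, ⟪x, y⟫ ≤ H x})
    (hhomog : ∀ c : ℝ, 0 < c → ∀ x : Euc n, H (c • x) = c * H x)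
    (hconv : ConvexOn ℝ Set.univ H)
    (hsmooth : ContDiffOn ℝ (⊤ : ℕ∞) H {(0 : Euc n)}ᶜ)
    (hpos : ∀ x ∈ sphere (0 : Euc n) 1, 0 < H x)
    (hposdef : ∀ x ∈ sphere (0 : Euc n) 1, (bmat n H x).PosDef)
    (Hs : Euc n → ℝ) (Kstar : Set (Euc n))
    (hKstar : Kstar = {y : Euc n | ∀ x ∈ K, ⟪x, y⟫ ≤ 1})
    (hKstar' : Kstar = {y : Euc n | ∀ x : Euc n, ⟪x, y⟫ ≤ Hs x})
    (hhomogs : ∀ c : ℝ, 0 < c → ∀ x : Euc n, Hs (c • x) = c * Hs x)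
    (hconvs : ConvexOn ℝ Set.univ Hs)
    (hsmooths : ContDiffOn ℝ (⊤ : ℕ∞) Hs {(0 : Euc n)}ᶜ)
    (hposs : ∀ x ∈ sphere (0 : Euc n) 1, 0 < Hs x)
    (hposdefs : ∀ x ∈ sphere (0 : Euc n) 1, (bmat n Hs x).PosDef) :
    ∀ x ∈ sphere (0 : Euc n) 1,
      H x ^ (n + 2) * Hs (‖gradient H x‖⁻¹ • gradient H x) ^ (n + 2)
          / (gaussCurv n H x * gaussCurv n Hs (‖gradient H x‖⁻¹ • gradient H x)) = 1 := by
  have two_le_top : (2 : WithTop ℕ∞) ≤ (⊤ : ℕ∞) := WithTop.coe_le_coe.2 le_top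
  subst hK hKstar
  exact fun x hx => polar_duality_identity_general
    ⟨hhomog, hconv, hsmooth.of_le two_le_top, hpos⟩
    ⟨hhomogs, hconvs, hsmooths.of_le two_le_top, hposs⟩ hKstar'.symm
    (mem_sphere_zero_iff_norm.1 hx)
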